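/- Suppose F ∈ D(Λ), i.e. its quantile function Q satisfies de Haan's criterion. Then σ²(s)/(2 s c(s)²) → 1 as s ↓ 0. -/

import Mathlib

open MeasureTheory Filter Set

noncomputable section

/-- The distribution function of a measure on `ℝ`. -/
def distFun (μ : Measure ℝ) : ℝ → ℝ := fun x => (μ (Set.Iic x)).toReal

/-- The quantile (left-continuous inverse) function of a distribution function. -/
def quantileFun (F : ℝ → ℝ) : ℝ → ℝ := fun s => sInf {x : ℝ | s ≤ F x}

/-- de Haan's criterion for the Gumbel domain of attraction, in terms of the
quantile function `Q`. -/
def DeHaanGumbel (Q : ℝ → ℝ) : Prop :=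
  ∀ x y z w : ℝ, 0 < x → 0 < y → 0 < z → 0 < w → y ≠ w →
    Tendsto (fun s : ℝ => (Q (1 - s * x) - Q (1 - s * z)) / (Q (1 - s * y) - Q (1 - s * w)))
      (nhdsWithin 0 (Set.Ioi 0))
      (nhds ((Real.log x - Real.log z) / (Real.log y - Real.log w)))

/-- The Lebesgue–Stieltjes measure `dQ` on `(0,1)` associated with the quantile function of
`F`: it coincides with the pushforward of Lebesgue measure under `F`
(for an interval `(a,b] ⊆ (0,1)` it has mass `Q(b+) - Q(a+)`). -/
def dQ (μ : Measure ℝ) : Measure ℝ := Measure.map (distFun μ) volume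

/-- `c(s,β) = s^{-β} ∫_{(1-s,1)} (1-u)^β dQ(u)`. -/
def cBeta (μ : Measure ℝ) (s β : ℝ) : ℝ :=
  s ^ (-β) * ∫ u in Set.Ioo (1 - s) 1, (1 - u) ^ β ∂(dQ μ)

/-- `c(s) = c(s,1) = s⁻¹ ∫_{(1-s,1)} (1-u) dQ(u)`. -/
def cFun (μ : Measure ℝ) (s : ℝ) : ℝ := cBeta μ s 1

/-- `σ²(s) = ∫_{(1-s,1)} ∫_{(1-s,1)} (min(u,v) - uv) dQ(u) dQ(v)`. -/
def sigmaSq (μ : Measure ℝ) (s : ℝ) : ℝ :=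
  ∫ v in Set.Ioo (1 - s) 1, (∫ u in Set.Ioo (1 - s) 1, (min u v - u * v) ∂(dQ μ)) ∂(dQ μ)

/-- A function is slowly varying at zero if `L(λ s)/L(s) → 1` as `s ↓ 0` for every `λ > 0`. -/
def SlowlyVaryingAtZero (L : ℝ → ℝ) : Prop :=
  ∀ lam : ℝ, 0 < lam →
    Tendsto (fun s : ℝ => L (lam * s) / L s) (nhdsWithin 0 (Set.Ioi 0)) (nhds 1)

/-- Condition (K) on the sequence of integers `k n`. -/
def CondK (k : ℕ → ℕ) : Prop :=
  (∀ n : ℕ, 1 ≤ k n ∧ k n ≤ n) ∧ Tendsto k atTop atTop ∧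
    Tendsto (fun n : ℕ => (k n : ℝ) / (n : ℝ)) atTop (nhds 0)

/-! Let `N(x)` be the `dQ`-mass of `(1 - s, 1 - s x)`. The layer-cake formula gives `c(s) = ∫₀¹ N`
and, since `min u v - u v = min (1 - u) (1 - v) - (1 - u) (1 - v)`, also
`σ²(s) = s ∫₀¹ N² - (s c(s))²`.

With `a(s) = Q(1 - s/e) - Q(1 - s)`, de Haan's criterion says that `N(x) / a(s) → -log x`. It also
gives `a(s/e) / a(s) → 1`, so summing the increments of `Q` along `1 - s, 1 - s/e, 1 - s/e², …`
yields the Potter bound `N(x) / a(s) ≤ C x ^ (-δ)` on `(0, 1]`, for any `δ > 0`. By dominated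
convergence `∫₀¹ (N / a(s)) ^ k → ∫₀¹ (-log x) ^ k = k!`, whence
`σ²(s) / (2 s c(s)²) = (∫₀¹ N²) / (2 (∫₀¹ N)²) - s / 2 → 2! / (2 (1!)²) = 1`. -/

open scoped Topology Nat

section QuantileFun

variable {s x : ℝ}

lemma quantileFun_le_iff (F : StieltjesFunction ℝ) (hne : {x | s ≤ F x}.Nonempty)
    (hbdd : BddBelow {x | s ≤ F x}) : quantileFun F s ≤ x ↔ s ≤ F x := by
  refine ⟨fun h => le_trans ?_ (F.mono h), fun h => csInf_le hbdd h⟩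
  have hright := (F.right_continuous (quantileFun F s)).mono Ioi_subset_Ici_self
  refine ge_of_tendsto hright ?_
  filter_upwards [self_mem_nhdsWithin] with y hy
  obtain ⟨z, hz, hzy⟩ := exists_lt_of_csInf_lt hne hy
  exact le_trans hz (F.mono hzy.le)

variable (μ : Measure ℝ) [IsProbabilityMeasure μ]

lemma distFun_eq_cdf : distFun μ = ProbabilityTheory.cdf μ :=
  funext fun x => (ProbabilityTheory.cdf_eq_real μ x).symm

lemma measurable_distFun : Measurable (distFun μ) := by
  rw [distFun_eq_cdf]
  exact (ProbabilityTheory.monotone_cdf μ).measurable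

lemma quantileFun_distFun_le_iff (hs : s ∈ Ioo (0 : ℝ) 1) :
    quantileFun (distFun μ) s ≤ x ↔ s ≤ distFun μ x := by
  rw [distFun_eq_cdf]
  obtain ⟨y, hy⟩ := ((ProbabilityTheory.tendsto_cdf_atBot μ).eventually (gt_mem_nhds hs.1)).exists
  obtain ⟨z, hz⟩ := ((ProbabilityTheory.tendsto_cdf_atTop μ).eventually (lt_mem_nhds hs.2)).exists
  exact quantileFun_le_iff _ ⟨z, hz.le⟩
    ⟨y, fun w hw => ((ProbabilityTheory.monotone_cdf μ).reflect_lt (hy.trans_le hw)).le⟩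

lemma monotoneOn_quantileFun_distFun : MonotoneOn (quantileFun (distFun μ)) (Ioo 0 1) :=
  fun _ ha _ hb hab => (quantileFun_distFun_le_iff μ ha).2 <|
    hab.trans ((quantileFun_distFun_le_iff μ hb).1 le_rfl)

lemma dQ_Ico {a b : ℝ} (ha : a ∈ Ioo (0 : ℝ) 1) (hb : b ∈ Ioo (0 : ℝ) 1) :
    dQ μ (Ico a b) =
      ENNReal.ofReal (quantileFun (distFun μ) b - quantileFun (distFun μ) a) := by
  have hpre : distFun μ ⁻¹' Ico a b =
      Ico (quantileFun (distFun μ) a) (quantileFun (distFun μ) b) := by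
    ext x
    simp only [mem_preimage, mem_Ico, ← quantileFun_distFun_le_iff μ ha,
      ← not_le, quantileFun_distFun_le_iff μ hb]
  rw [dQ, Measure.map_apply (measurable_distFun μ) measurableSet_Ico, hpre, Real.volume_Ico]

lemma dQ_real_Ico {a b : ℝ} (ha : a ∈ Ioo (0 : ℝ) 1) (hb : b ∈ Ioo (0 : ℝ) 1) (hab : a ≤ b) :
    (dQ μ).real (Ico a b) = quantileFun (distFun μ) b - quantileFun (distFun μ) a := by
  rw [Measure.real, dQ_Ico μ ha hb,
    ENNReal.toReal_ofReal (sub_nonneg.2 (monotoneOn_quantileFun_distFun μ ha hb hab))]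

end QuantileFun

section LayerCake

lemma integral_prod_min {α : Type*} [MeasurableSpace α] {ν : Measure α} [SFinite ν] {f : α → ℝ}
    (hf0 : 0 ≤ᵐ[ν] f)
    (hf : Integrable (fun z : α × α => min (f z.1) (f z.2)) (ν.prod ν)) :
    ∫ z, min (f z.1) (f z.2) ∂(ν.prod ν) = ∫ t in Ioi (0 : ℝ), ν.real {x | t < f x} ^ 2 := by
  have hmin0 : 0 ≤ᵐ[ν.prod ν] fun z => min (f z.1) (f z.2) := by
    filter_upwards [Measure.quasiMeasurePreserving_fst.ae hf0,
      Measure.quasiMeasurePreserving_snd.ae hf0] with z h₁ h₂ using le_min h₁ h₂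
  have hprod (t : ℝ) : {z : α × α | t < min (f z.1) (f z.2)} =
      {x | t < f x} ×ˢ {x | t < f x} := by
    ext z
    simp only [lt_min_iff, mem_ofPred_eq, mem_prod]
  simp only [hf.integral_eq_integral_meas_lt hmin0, hprod, measureReal_prod_prod, sq]

lemma min_one_sub_one_sub (u v : ℝ) :
    min (1 - u) (1 - v) = min u v - u * v + (1 - u) * (1 - v) := by
  rw [min_sub_sub_left]
  linear_combination -min_add_max u v

lemma min_sub_mul_nonneg {u v : ℝ} (hu : u ∈ Icc (0 : ℝ) 1) (hv : v ∈ Icc (0 : ℝ) 1) :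
    0 ≤ min u v - u * v :=
  sub_nonneg.2 (le_min (mul_le_of_le_one_right hu.1 hv.2) (mul_le_of_le_one_left hv.1 hu.2))

lemma integrable_prod_min_sub_mul {ν : Measure ℝ} [SFinite ν] (hν : ∀ᵐ u ∂ν, u ∈ Icc (0 : ℝ) 1)
    (hker : ∀ᵐ v ∂ν, Integrable (fun u => min u v - u * v) ν)
    (hker' : Integrable (fun v => ∫ u, (min u v - u * v) ∂ν) ν) :
    Integrable (fun z : ℝ × ℝ => min z.1 z.2 - z.1 * z.2) (ν.prod ν) := by
  have hmeas : Continuous fun z : ℝ × ℝ => min z.1 z.2 - z.1 * z.2 := by fun_prop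
  rw [integrable_prod_iff' hmeas.aestronglyMeasurable]
  refine ⟨hker, hker'.congr ?_⟩
  filter_upwards [hν] with v hv
  refine integral_congr_ae ?_
  filter_upwards [hν] with u hu using (Real.norm_of_nonneg (min_sub_mul_nonneg hu hv)).symm

lemma integral_integral_min_sub_mul {ν : Measure ℝ} [SFinite ν]
    (hν : ∀ᵐ u ∂ν, u ∈ Icc (0 : ℝ) 1) (hone : Integrable (fun u => 1 - u) ν)
    (hker : ∀ᵐ v ∂ν, Integrable (fun u => min u v - u * v) ν)
    (hker' : Integrable (fun v => ∫ u, (min u v - u * v) ∂ν) ν) :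
    ∫ v, (∫ u, (min u v - u * v) ∂ν) ∂ν =
      (∫ t in Ioi (0 : ℝ), ν.real {u | t < 1 - u} ^ 2) - (∫ u, (1 - u) ∂ν) ^ 2 := by
  have hkernel := integrable_prod_min_sub_mul hν hker hker'
  have hmul := hone.mul_prod hone
  have hmin : Integrable (fun z : ℝ × ℝ => min (1 - z.1) (1 - z.2)) (ν.prod ν) :=
    (hkernel.add hmul).congr <| .of_forall fun z => (min_one_sub_one_sub z.1 z.2).symm
  have hnonneg : 0 ≤ᵐ[ν] fun u => 1 - u := by
    filter_upwards [hν] with u hu using sub_nonneg.2 hu.2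
  rw [← integral_prod_symm (fun z : ℝ × ℝ => min z.1 z.2 - z.1 * z.2) hkernel,
    ← integral_prod_min hnonneg hmin, sq, ← integral_prod_mul (fun u => 1 - u) (fun u => 1 - u),
    ← integral_sub hmin hmul]
  simp only [min_one_sub_one_sub, add_sub_cancel_right]

lemma restrict_Ioo_real_setOf_lt_one_sub (ν : Measure ℝ) {a t : ℝ} (ht : 0 ≤ t) :
    (ν.restrict (Ioo a 1)).real {u | t < 1 - u} = ν.real (Ioo a (1 - t)) := by
  rw [measureReal_restrict_apply (measurableSet_lt measurable_const (by fun_prop))]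
  congr 1
  ext u
  simp only [mem_inter_iff, mem_ofPred_eq, mem_Ioo]
  constructor
  · rintro ⟨hut, hau, -⟩
    exact ⟨hau, by linarith⟩
  · rintro ⟨hau, hut⟩
    exact ⟨by linarith, hau, by linarith⟩

lemma setIntegral_Ioi_eq_mul_intervalIntegral {g : ℝ → ℝ} {s : ℝ} (hs : 0 ≤ s)
    (hg : ∀ t, s < t → g t = 0) :
    ∫ t in Ioi (0 : ℝ), g t = s * ∫ x in (0 : ℝ)..1, g (s * x) := by
  rw [intervalIntegral.mul_integral_comp_mul_left, mul_zero, mul_one,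
    intervalIntegral.integral_of_le hs]
  exact setIntegral_eq_of_subset_of_forall_sdiff_eq_zero measurableSet_Ioi
    (fun t ht => ht.1) (fun t ht => hg t (lt_of_not_ge fun hle => ht.2 ⟨ht.1, hle⟩))

end LayerCake

section TailMass

/-- The `dQ`-mass of the interval `(1 - s, 1 - s x)`, which for `s > 0` and `x ≥ 0` is that of
the set of `u ∈ (1 - s, 1)` with rescaled distance `(1 - u) / s` to the endpoint larger than `x`. -/
def tailMass (μ : Measure ℝ) (s x : ℝ) : ℝ := (dQ μ).real (Ioo (1 - s) (1 - s * x))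

variable {μ : Measure ℝ} {s : ℝ}

lemma tailMass_nonneg (x : ℝ) : 0 ≤ tailMass μ s x := measureReal_nonneg

lemma measurable_tailMass (hs : 0 ≤ s) : Measurable (tailMass μ s) := by
  have hanti : Antitone fun x : ℝ => dQ μ (Ioo (1 - s) (1 - s * x)) :=
    fun x y hxy => measure_mono (Ioo_subset_Ioo_right (by gcongr))
  exact hanti.measurable.ennreal_toReal

lemma setIntegral_dQ_real_Ioo_pow (hs : 0 ≤ s) {k : ℕ} (hk : k ≠ 0) :
    ∫ t in Ioi (0 : ℝ), (dQ μ).real (Ioo (1 - s) (1 - t)) ^ k =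
      s * ∫ x in (0 : ℝ)..1, tailMass μ s x ^ k :=
  setIntegral_Ioi_eq_mul_intervalIntegral hs fun t ht => by
    rw [Ioo_eq_empty (by linarith), measureReal_empty, zero_pow hk]

lemma setIntegral_one_sub_dQ (hs : s ≠ 0) :
    ∫ u in Ioo (1 - s) 1, (1 - u) ∂(dQ μ) = s * cFun μ s := by
  simp only [cFun, cBeta, Real.rpow_one, Real.rpow_neg_one, mul_inv_cancel_left₀ hs]

lemma cFun_eq_integral_tailMass (hs : 0 < s)
    (hone : IntegrableOn (fun u => 1 - u) (Ioo (1 - s) 1) (dQ μ)) :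
    cFun μ s = ∫ x in (0 : ℝ)..1, tailMass μ s x := by
  have hnonneg : 0 ≤ᵐ[(dQ μ).restrict (Ioo (1 - s) 1)] fun u => 1 - u := by
    filter_upwards [ae_restrict_mem measurableSet_Ioo] with u hu using sub_nonneg.2 hu.2.le
  refine mul_left_cancel₀ hs.ne' ?_
  calc s * cFun μ s = ∫ u in Ioo (1 - s) 1, (1 - u) ∂(dQ μ) := (setIntegral_one_sub_dQ hs.ne').symm
    _ = ∫ t in Ioi (0 : ℝ), (dQ μ).real (Ioo (1 - s) (1 - t)) := by
      rw [hone.integral_eq_integral_meas_lt hnonneg]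
      exact setIntegral_congr_fun measurableSet_Ioi fun t ht =>
        restrict_Ioo_real_setOf_lt_one_sub (dQ μ) (le_of_lt ht)
    _ = s * ∫ x in (0 : ℝ)..1, tailMass μ s x := by
      simpa only [pow_one] using setIntegral_dQ_real_Ioo_pow (μ := μ) hs.le one_ne_zero

lemma sigmaSq_eq_integral_tailMass_sq [IsProbabilityMeasure μ] (hs : s ∈ Ioc (0 : ℝ) 1)
    (hone : IntegrableOn (fun u => 1 - u) (Ioo (1 - s) 1) (dQ μ))
    (hker : ∀ v ∈ Ioo (1 - s) (1 : ℝ),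
      IntegrableOn (fun u => min u v - u * v) (Ioo (1 - s) 1) (dQ μ))
    (hker' : IntegrableOn (fun v => ∫ u in Ioo (1 - s) 1, (min u v - u * v) ∂(dQ μ))
      (Ioo (1 - s) 1) (dQ μ)) :
    sigmaSq μ s = s * (∫ x in (0 : ℝ)..1, tailMass μ s x ^ 2) - (s * cFun μ s) ^ 2 := by
  have : SFinite (dQ μ) := inferInstanceAs (SFinite (Measure.map (distFun μ) volume))
  have hmem : ∀ᵐ u ∂(dQ μ).restrict (Ioo (1 - s) 1), u ∈ Ioo (1 - s) 1 :=
    ae_restrict_mem measurableSet_Ioo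
  have hIcc : ∀ᵐ u ∂(dQ μ).restrict (Ioo (1 - s) 1), u ∈ Icc (0 : ℝ) 1 := by
    filter_upwards [hmem] with u hu using ⟨by linarith [hu.1, hs.2], hu.2.le⟩
  rw [sigmaSq, integral_integral_min_sub_mul hIcc hone (hmem.mono hker) hker',
    setIntegral_one_sub_dQ hs.1.ne', ← setIntegral_dQ_real_Ioo_pow hs.1.le two_ne_zero]
  congr 1
  refine setIntegral_congr_fun measurableSet_Ioi fun t ht => ?_
  simp only [restrict_Ioo_real_setOf_lt_one_sub (dQ μ) (le_of_lt ht)]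

end TailMass

section Potter

variable {f : ℝ → ℝ} {r s s₀ : ℝ}

lemma mul_pow_mem_Ioo (hr₀ : 0 < r) (hr₁ : r < 1) (hs : s ∈ Ioo 0 s₀) (n : ℕ) :
    s * r ^ n ∈ Ioo 0 s₀ :=
  ⟨mul_pos hs.1 (pow_pos hr₀ n),
    (mul_le_of_le_one_right hs.1.le (pow_le_one₀ hr₀.le hr₁.le)).trans_lt hs.2⟩

lemma increment_mul_pow_le {l : ℝ} (hr₀ : 0 < r) (hr₁ : r < 1) (hl : 0 ≤ l)
    (hstep : ∀ t ∈ Ioo 0 s₀, f (t * r * r) - f (t * r) ≤ l * (f (t * r) - f t))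
    (hs : s ∈ Ioo 0 s₀) (n : ℕ) :
    f (s * r ^ (n + 1)) - f (s * r ^ n) ≤ l ^ n * (f (s * r) - f s) := by
  induction n with
  | zero => simp
  | succ n ih =>
    calc f (s * r ^ (n + 2)) - f (s * r ^ (n + 1))
        ≤ l * (f (s * r ^ (n + 1)) - f (s * r ^ n)) := by
          simpa only [pow_succ, mul_assoc] using hstep _ (mul_pow_mem_Ioo hr₀ hr₁ hs n)
      _ ≤ l * (l ^ n * (f (s * r) - f s)) := by gcongr
      _ = l ^ (n + 1) * (f (s * r) - f s) := by ring

lemma geom_sum_rpow_neg_le {δ : ℝ} (hr₀ : 0 < r) (hr₁ : r < 1) (hδ : 0 < δ) (n : ℕ) :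
    ∑ i ∈ Finset.range (n + 1), (r ^ (-δ)) ^ i ≤ (1 - r ^ δ)⁻¹ * (r ^ (-δ)) ^ n := by
  have hl : 1 < r ^ (-δ) := Real.one_lt_rpow_of_pos_of_lt_one_of_neg hr₀ hr₁ (neg_lt_zero.2 hδ)
  have hrδ : r ^ δ < 1 := Real.rpow_lt_one hr₀.le hr₁ hδ
  have hinv : r ^ (-δ) * r ^ δ = 1 := by
    rw [← Real.rpow_add hr₀, neg_add_cancel, Real.rpow_zero]
  rw [geom_sum_eq hl.ne', div_le_iff₀ (sub_pos.2 hl), inv_mul_eq_div, div_mul_eq_mul_div,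
    le_div_iff₀ (sub_pos.2 hrδ)]
  linear_combination -(r ^ (-δ)) ^ n * hinv + hrδ

/-- With `l = r ^ (-δ)` the increments along `s, s r, s r², …` grow at most geometrically, and the
sum of the first `n + 1` of them is comparable to the last, `l ^ n = (r ^ n) ^ (-δ)`. -/
lemma sub_le_mul_rpow_of_antitoneOn {δ : ℝ} (hf : AntitoneOn f (Ioo 0 s₀))
    (hr₀ : 0 < r) (hr₁ : r < 1) (hδ : 0 < δ)
    (hstep : ∀ t ∈ Ioo 0 s₀, f (t * r * r) - f (t * r) ≤ r ^ (-δ) * (f (t * r) - f t))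
    (hs : s ∈ Ioo 0 s₀) {x : ℝ} (hx : x ∈ Ioc (0 : ℝ) 1) :
    f (s * x) - f s ≤ (1 - r ^ δ)⁻¹ * (f (s * r) - f s) * x ^ (-δ) := by
  set l := r ^ (-δ) with hl
  set a := f (s * r) - f s
  have hrδ : r ^ δ < 1 := Real.rpow_lt_one hr₀.le hr₁ hδ
  have hmem := mul_pow_mem_Ioo hr₀ hr₁ hs
  have hsr : s * r ∈ Ioo 0 s₀ := by simpa only [pow_one] using hmem 1
  have ha : 0 ≤ a := sub_nonneg.2 (hf hsr hs (mul_le_of_le_one_right hs.1.le hr₁.le))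
  obtain ⟨n, hn, hxn⟩ := exists_nat_pow_near_of_lt_one hx.1 hx.2 hr₀ hr₁
  have hln : l ^ n ≤ x ^ (-δ) := by
    rw [hl, ← Real.rpow_natCast, ← Real.rpow_mul hr₀.le, mul_comm, Real.rpow_mul hr₀.le,
      Real.rpow_natCast]
    exact Real.rpow_le_rpow_of_nonpos hx.1 hxn (neg_nonpos.2 hδ.le)
  calc f (s * x) - f s ≤ f (s * r ^ (n + 1)) - f s := by
        have hsx : s * x ∈ Ioo 0 s₀ :=
          ⟨mul_pos hs.1 hx.1, (mul_le_of_le_one_right hs.1.le hx.2).trans_lt hs.2⟩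
        gcongr
        exact hf (hmem (n + 1)) hsx (mul_le_mul_of_nonneg_left hn.le hs.1.le)
    _ = ∑ i ∈ Finset.range (n + 1), (f (s * r ^ (i + 1)) - f (s * r ^ i)) := by
        rw [Finset.sum_range_sub fun i => f (s * r ^ i), pow_zero, mul_one]
    _ ≤ (∑ i ∈ Finset.range (n + 1), l ^ i) * a := by
        rw [Finset.sum_mul]
        exact Finset.sum_le_sum fun i _ =>
          increment_mul_pow_le hr₀ hr₁ (Real.rpow_nonneg hr₀.le _) hstep hs i
    _ ≤ (1 - r ^ δ)⁻¹ * x ^ (-δ) * a := by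
        gcongr
        exact (geom_sum_rpow_neg_le hr₀ hr₁ hδ n).trans (by gcongr)
    _ = (1 - r ^ δ)⁻¹ * a * x ^ (-δ) := by ring

end Potter

/-- de Haan's auxiliary function `a(s)` of a quantile function `Q`; the step `e⁻¹` normalizes it so
that `Q (1 - s x) - Q (1 - s)` is asymptotic to `-log x * a(s)`. -/
def gumbelScale (Q : ℝ → ℝ) (s : ℝ) : ℝ := Q (1 - s * Real.exp (-1)) - Q (1 - s)

namespace DeHaanGumbel

variable {Q : ℝ → ℝ}

lemma tendsto_sub_div_gumbelScale (hD : DeHaanGumbel Q) {x z : ℝ} (hx : 0 < x) (hz : 0 < z) :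
    Tendsto (fun s => (Q (1 - s * x) - Q (1 - s * z)) / gumbelScale Q s) (𝓝[>] 0)
      (𝓝 (Real.log z - Real.log x)) := by
  have hlim := hD x (Real.exp (-1)) z 1 hx (Real.exp_pos _) hz one_pos (by simp)
  simpa [gumbelScale, div_neg] using hlim

lemma eventually_gumbelScale_pos (hD : DeHaanGumbel Q) (hQ : MonotoneOn Q (Ioo 0 1)) :
    ∀ᶠ s in 𝓝[>] 0, 0 < gumbelScale Q s := by
  have hlim := hD.tendsto_sub_div_gumbelScale (Real.exp_pos (-1)) one_pos
  rw [Real.log_one, Real.log_exp, sub_neg_eq_add, zero_add] at hlim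
  filter_upwards [hlim.eventually_ne one_ne_zero, Ioo_mem_nhdsGT one_pos] with s hne hs
  have hlt : s * Real.exp (-1) < s :=
    mul_lt_of_lt_one_right hs.1 (Real.exp_lt_one_iff.2 neg_one_lt_zero)
  have hpos : 0 < s * Real.exp (-1) := mul_pos hs.1 (Real.exp_pos _)
  refine lt_of_le_of_ne (sub_nonneg.2 (hQ ?_ ?_ ?_)) (div_ne_zero_iff.1 hne).2.symm
  all_goals grind

lemma eventually_gumbelScale_mul_exp_le (hD : DeHaanGumbel Q) (hQ : MonotoneOn Q (Ioo 0 1)) {l : ℝ}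
    (hl : 1 < l) :
    ∀ᶠ s in 𝓝[>] 0, gumbelScale Q (s * Real.exp (-1)) ≤ l * gumbelScale Q s := by
  have hlim := hD.tendsto_sub_div_gumbelScale (Real.exp_pos (-2)) (Real.exp_pos (-1))
  simp only [Real.log_exp] at hlim
  filter_upwards [hlim.eventually (gt_mem_nhds (by linarith : -1 - -2 < l)),
    hD.eventually_gumbelScale_pos hQ] with s hlt hpos
  rw [gumbelScale, mul_assoc, ← Real.exp_add, ← div_le_iff₀ hpos,
    show (-1 : ℝ) + -1 = -2 by norm_num]
  exact hlt.le

lemma exists_eventually_sub_div_gumbelScale_le (hD : DeHaanGumbel Q) (hQ : MonotoneOn Q (Ioo 0 1))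
    {δ : ℝ} (hδ : 0 < δ) :
    ∃ C, ∀ᶠ s in 𝓝[>] 0, ∀ x ∈ Ioc (0 : ℝ) 1,
      (Q (1 - s * x) - Q (1 - s)) / gumbelScale Q s ≤ C * x ^ (-δ) := by
  have hexp : Real.exp (-1) < 1 := Real.exp_lt_one_iff.2 neg_one_lt_zero
  have hl : 1 < Real.exp (-1) ^ (-δ) :=
    Real.one_lt_rpow_of_pos_of_lt_one_of_neg (Real.exp_pos _) hexp (neg_lt_zero.2 hδ)
  obtain ⟨s₀, hs₀, hstep⟩ := mem_nhdsGT_iff_exists_Ioo_subset.1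
    ((hD.eventually_gumbelScale_mul_exp_le hQ hl).and (Ioo_mem_nhdsGT one_pos))
  have hanti : AntitoneOn (fun t => Q (1 - t)) (Ioo 0 s₀) := fun t ht t' ht' htt' =>
    hQ (by grind) (by grind) (by linarith)
  refine ⟨(1 - Real.exp (-1) ^ δ)⁻¹, ?_⟩
  filter_upwards [Ioo_mem_nhdsGT hs₀, hD.eventually_gumbelScale_pos hQ] with s hs hpos x hx
  rw [div_le_iff₀ hpos, mul_right_comm]
  exact sub_le_mul_rpow_of_antitoneOn hanti (Real.exp_pos _) hexp hδ
    (fun t ht => (hstep ht).1) hs hx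

end DeHaanGumbel

lemma integral_neg_log_pow (k : ℕ) : ∫ x in (0 : ℝ)..1, (-Real.log x) ^ k = (k ! : ℝ) := by
  have himage : (fun t => Real.exp (-t)) '' Ioi 0 = Ioo 0 1 := by
    ext x
    constructor
    · rintro ⟨t, ht, rfl⟩
      exact ⟨Real.exp_pos _, Real.exp_lt_one_iff.2 (neg_lt_zero.2 ht)⟩
    · rintro ⟨hx₀, hx₁⟩
      exact ⟨-Real.log x, neg_pos.2 (Real.log_neg hx₀ hx₁), by simp [Real.exp_log hx₀]⟩
  have hderiv (t : ℝ) : HasDerivAt (fun t => Real.exp (-t)) (-Real.exp (-t)) t := by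
    simpa using (hasDerivAt_neg t).exp
  have hanti : Antitone fun t : ℝ => Real.exp (-t) :=
    fun _ _ h => Real.exp_le_exp.2 (neg_le_neg h)
  rw [intervalIntegral.integral_of_le zero_le_one, integral_Ioc_eq_integral_Ioo, ← himage,
    integral_image_eq_integral_deriv_smul_of_antitoneOn measurableSet_Ioi
      (fun t _ => (hderiv t).hasDerivWithinAt) (hanti.antitoneOn _),
    ← Real.Gamma_nat_eq_factorial, Real.Gamma_eq_integral (by positivity)]
  simp

section Asymptotics

variable {μ : Measure ℝ} [IsProbabilityMeasure μ]

lemma tailMass_le_sub {s x : ℝ} (hs : s ∈ Ioo (0 : ℝ) 1) (hx : x ∈ Ioc (0 : ℝ) 1) :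
    tailMass μ s x ≤ quantileFun (distFun μ) (1 - s * x) - quantileFun (distFun μ) (1 - s) := by
  have hsx : s * x ∈ Ioc 0 s := ⟨mul_pos hs.1 hx.1, mul_le_of_le_one_right hs.1.le hx.2⟩
  have ha : 1 - s ∈ Ioo (0 : ℝ) 1 := by grind
  have hb : 1 - s * x ∈ Ioo (0 : ℝ) 1 := by grind
  rw [← dQ_real_Ico μ ha hb (by grind)]
  exact measureReal_mono Ioo_subset_Ico_self (by simp [dQ_Ico μ ha hb])

lemma sub_le_tailMass {s x y : ℝ} (hs : s ∈ Ioo (0 : ℝ) 1) (hx : 0 < x) (hxy : x ≤ y)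
    (hy : y < 1) :
    quantileFun (distFun μ) (1 - s * x) - quantileFun (distFun μ) (1 - s * y) ≤
      tailMass μ s x := by
  have hsy : s * y < s := mul_lt_of_lt_one_right hs.1 hy
  have hsxy : s * x ≤ s * y := mul_le_mul_of_nonneg_left hxy hs.1.le
  have hsx : 0 < s * x := mul_pos hs.1 hx
  have ha : 1 - s ∈ Ioo (0 : ℝ) 1 := by grind
  have hb : 1 - s * x ∈ Ioo (0 : ℝ) 1 := by grind
  have hc : 1 - s * y ∈ Ioo (0 : ℝ) 1 := by grind
  rw [← dQ_real_Ico μ hc hb (by linarith)]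
  refine measureReal_mono (fun u hu => ⟨by linarith [hu.1], hu.2⟩) (ne_top_of_le_ne_top ?_
    (measure_mono Ioo_subset_Ico_self))
  simp [dQ_Ico μ ha hb]

lemma tendsto_tailMass_div_gumbelScale (hD : DeHaanGumbel (quantileFun (distFun μ))) {x : ℝ}
    (hx : x ∈ Ioc (0 : ℝ) 1) :
    Tendsto (fun s => tailMass μ s x / gumbelScale (quantileFun (distFun μ)) s) (𝓝[>] 0)
      (𝓝 (-Real.log x)) := by
  have hscale := hD.eventually_gumbelScale_pos (monotoneOn_quantileFun_distFun μ)
  have hunit : ∀ᶠ s in 𝓝[>] (0 : ℝ), s ∈ Ioo (0 : ℝ) 1 := Ioo_mem_nhdsGT one_pos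
  rcases hx.2.eq_or_lt with rfl | hx₁
  · simp [tailMass]
  rw [tendsto_order]
  constructor
  · intro b hb
    have hcont : Tendsto (fun y => Real.log y - Real.log x) (𝓝[<] 1) (𝓝 (-Real.log x)) := by
      have hlog := ((Real.continuousAt_log one_ne_zero).tendsto.sub_const (Real.log x)).mono_left
        (nhdsWithin_le_nhds (s := Iio 1))
      rwa [Real.log_one, zero_sub] at hlog
    obtain ⟨y, hby, hxy, hy⟩ :=
      ((hcont.eventually (lt_mem_nhds hb)).and (Ioo_mem_nhdsLT hx₁)).exists
    have hlim := hD.tendsto_sub_div_gumbelScale hx.1 (hx.1.trans hxy)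
    filter_upwards [hlim.eventually (lt_mem_nhds hby), hscale, hunit] with s hlt hpos hs
    refine hlt.trans_le ?_
    gcongr
    exact sub_le_tailMass hs hx.1 hxy.le hy
  · intro b hb
    have hlim := hD.tendsto_sub_div_gumbelScale hx.1 one_pos
    simp only [mul_one, Real.log_one, zero_sub] at hlim
    filter_upwards [hlim.eventually (gt_mem_nhds hb), hscale, hunit] with s hlt hpos hs
    refine lt_of_le_of_lt ?_ hlt
    gcongr
    exact tailMass_le_sub hs hx

lemma exists_eventually_norm_tailMass_div_gumbelScale_le
    (hD : DeHaanGumbel (quantileFun (distFun μ))) {δ : ℝ} (hδ : 0 < δ) :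
    ∃ C, ∀ᶠ s in 𝓝[>] 0, ∀ x ∈ Ioc (0 : ℝ) 1,
      ‖tailMass μ s x / gumbelScale (quantileFun (distFun μ)) s‖ ≤ C * x ^ (-δ) := by
  have hmono := monotoneOn_quantileFun_distFun μ
  obtain ⟨C, hC⟩ := hD.exists_eventually_sub_div_gumbelScale_le hmono hδ
  refine ⟨C, ?_⟩
  filter_upwards [hC, hD.eventually_gumbelScale_pos hmono, Ioo_mem_nhdsGT one_pos]
    with s hle hpos hs x hx
  rw [Real.norm_of_nonneg (div_nonneg (tailMass_nonneg x) hpos.le)]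
  refine le_trans ?_ (hle x hx)
  gcongr
  exact tailMass_le_sub hs hx

lemma tendsto_integral_tailMass_pow_div_gumbelScale_pow
    (hD : DeHaanGumbel (quantileFun (distFun μ))) (k : ℕ) :
    Tendsto (fun s => (∫ x in (0 : ℝ)..1, tailMass μ s x ^ k) /
      gumbelScale (quantileFun (distFun μ)) s ^ k) (𝓝[>] 0) (𝓝 (k ! : ℝ)) := by
  -- Any exponent `δ` with `δ * k < 1` makes the `k`-th power of the Potter bound integrable.
  have hδ : (0 : ℝ) < (k + 1 : ℝ)⁻¹ := by positivity
  have hδk : -1 < -(k + 1 : ℝ)⁻¹ * k := by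
    rw [neg_mul, neg_lt_neg_iff, inv_mul_lt_one₀ (by positivity)]
    exact lt_add_one _
  obtain ⟨C, hC⟩ := exists_eventually_norm_tailMass_div_gumbelScale_le hD hδ
  have hbound : IntervalIntegrable (fun x : ℝ => (C * x ^ (-(k + 1 : ℝ)⁻¹)) ^ k) volume 0 1 := by
    refine ((intervalIntegral.intervalIntegrable_rpow' hδk).const_mul (C ^ k)).congr fun x hx => ?_
    rw [uIoc_of_le zero_le_one] at hx
    simp only [mul_pow, Real.rpow_mul_natCast hx.1.le]
  simp only [← intervalIntegral.integral_div, ← div_pow, ← integral_neg_log_pow k]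
  refine intervalIntegral.tendsto_integral_filter_of_dominated_convergence _ ?_ ?_ hbound ?_
  · filter_upwards [self_mem_nhdsWithin] with s hs
    exact (((measurable_tailMass (le_of_lt hs)).div_const _).pow_const k).aestronglyMeasurable
  · filter_upwards [hC] with s hle
    refine .of_forall fun x hx => ?_
    rw [uIoc_of_le zero_le_one] at hx
    rw [norm_pow]
    exact pow_le_pow_left₀ (norm_nonneg _) (hle x hx) k
  · refine .of_forall fun x hx => (tendsto_tailMass_div_gumbelScale hD ?_).pow k
    rwa [uIoc_of_le zero_le_one] at hx

end Asymptotics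

/-- **Lemma 6.** If `F ∈ D(Λ)` then `σ²(s)/(2 s c(s)²) → 1` as `s ↓ 0`. -/
theorem sigmaSq_div_tendsto
    (μ : Measure ℝ) [IsProbabilityMeasure μ] (F Q : ℝ → ℝ)
    (hF : F = distFun μ) (hQ : Q = quantileFun F)
    (hD : DeHaanGumbel Q)
    (hfin : ∀ᶠ s in nhdsWithin (0:ℝ) (Set.Ioi 0),
      IntegrableOn (fun u : ℝ => 1 - u) (Set.Ioo (1 - s) 1) (dQ μ) ∧
      (∀ v ∈ Set.Ioo (1 - s) (1:ℝ),
        IntegrableOn (fun u : ℝ => min u v - u * v) (Set.Ioo (1 - s) 1) (dQ μ)) ∧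
      IntegrableOn (fun v : ℝ => ∫ u in Set.Ioo (1 - s) 1, (min u v - u * v) ∂(dQ μ))
        (Set.Ioo (1 - s) 1) (dQ μ) ∧
      0 < cFun μ s) :
    Tendsto (fun s : ℝ => sigmaSq μ s / (2 * s * (cFun μ s) ^ 2))
      (nhdsWithin 0 (Set.Ioi 0)) (nhds 1) := by
  subst hF hQ
  have hfirst := tendsto_integral_tailMass_pow_div_gumbelScale_pow hD 1
  have hsecond := tendsto_integral_tailMass_pow_div_gumbelScale_pow hD 2
  have hhalf : Tendsto (fun s : ℝ => s / 2) (𝓝[>] 0) (𝓝 0) := by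
    simpa using ((continuous_id.tendsto (0 : ℝ)).div_const 2).mono_left nhdsWithin_le_nhds
  have hlim := (hsecond.div ((hfirst.pow 2).const_mul 2) (by simp)).sub hhalf
  rw [show (2 ! : ℝ) / (2 * (1 ! : ℝ) ^ 2) - 0 = 1 by simp] at hlim
  refine hlim.congr' ?_
  filter_upwards [hfin, Ioo_mem_nhdsGT one_pos,
    hD.eventually_gumbelScale_pos (monotoneOn_quantileFun_distFun μ)]
    with s ⟨hone, hker, hker', hc⟩ hs hscale
  have hs₀ : s ≠ 0 := hs.1.ne'
  simp only [sigmaSq_eq_integral_tailMass_sq ⟨hs.1, hs.2.le⟩ hone hker hker', pow_one,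
    Pi.div_apply, ← cFun_eq_integral_tailMass hs.1 hone]
  field_simp
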